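/- (Restriction of $\omega^{+,-}$ to the boundary stratum $\gamma$ reproduces the 2-colored propagator $\omega^-$.) Let $\tilde{z}, \tilde{w} \in \mathbb{H}$ with $\tilde{z} \neq \tilde{w}$, and let $x, y \in \mathbb{R}$ with $y > x$. Then $\lim_{\varepsilon \to 0^+} \eta^{+,-}\big(y + \varepsilon \tilde{z},\; y + \varepsilon \tilde{w},\; x\big) = \dfrac{\tilde{w} - \tilde{z}}{\overline{\tilde{w}} - \tilde{z}}$, i.e. the limit is exactly the argument function of Kontsevich's propagator $\omega^-$, namely the function whose $\frac{1}{2\pi}\arg$ is $\varphi^-(\tilde z,\tilde w) = \varphi^+(\tilde w, \tilde z)$. -/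

import Mathlib

/-- The principal complex square root. -/
noncomputable def csqrt (z : ℂ) : ℂ := z ^ (1 / 2 : ℂ)

/-- Cattaneo–Felder's 4-colored propagator function `η^{+,-}`. -/
noncomputable def etaPM (z w : ℂ) (x : ℝ) : ℂ :=
  ((csqrt (z - x) - csqrt (w - x)) * (csqrt (z - x) + (starRingEnd ℂ) (csqrt (w - x)))) /
    ((csqrt (z - x) - (starRingEnd ℂ) (csqrt (w - x))) * (csqrt (z - x) + csqrt (w - x)))

/-!
Put `a = √(z - x)` and `b = √(w - x)`. Since `a² - b² = z - w` and `a² - b̄² = z - w̄`,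
`η^{+,-}(z, w, x) = (w - z) / (w̄ - z) * ((a + b̄) / (a + b))²`.
The first factor is unchanged by real translations and dilations. The second tends to `1` when
`z` and `w` collapse to a real point `y > x`, because `a` and `b` then have the same positive
limit `√(y - x)`.
-/

open Filter Topology ComplexConjugate

/-- The argument function of Kontsevich's propagator `ω⁻`: its `arg / 2π` is
`φ⁻(z, w) = φ⁺(w, z)`. -/
noncomputable def kontsevichMinus (z w : ℂ) : ℂ := (w - z) / (conj w - z)

/-- The factor by whose square `η^{+,-}` differs from `kontsevichMinus`. -/
noncomputable def sqrtSumRatio (z w : ℂ) (x : ℝ) : ℂ :=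
  (csqrt (z - x) + conj (csqrt (w - x))) / (csqrt (z - x) + csqrt (w - x))

theorem csqrt_sq (u : ℂ) : csqrt u ^ 2 = u := by
  simpa only [csqrt, one_div, Nat.cast_ofNat] using Complex.cpow_nat_inv_pow u two_ne_zero

theorem csqrt_ofReal {r : ℝ} (hr : 0 ≤ r) : csqrt r = (√r : ℝ) := by
  rw [csqrt, Real.sqrt_eq_rpow, Complex.ofReal_cpow hr]
  norm_num

theorem continuousAt_csqrt {u : ℂ} (hu : u ∈ Complex.slitPlane) : ContinuousAt csqrt u :=
  continuousAt_cpow_const hu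

theorem conj_ne_of_im_pos {z w : ℂ} (hw : 0 < w.im) (hz : 0 < z.im) : conj w ≠ z := by
  rintro rfl
  rw [Complex.conj_im] at hz
  linarith

theorem tendsto_kontsevichMinus {ι : Type*} {l : Filter ι} {z w : ι → ℂ} {z₀ w₀ : ℂ}
    (hne : conj w₀ ≠ z₀) (hz : Tendsto z l (𝓝 z₀)) (hw : Tendsto w l (𝓝 w₀)) :
    Tendsto (fun i => kontsevichMinus (z i) (w i)) l (𝓝 (kontsevichMinus z₀ w₀)) := by
  have hconj : Tendsto (fun i => conj (w i)) l (𝓝 (conj w₀)) :=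
    (Complex.continuous_conj.tendsto w₀).comp hw
  exact (hw.sub hz).div (hconj.sub hz) (sub_ne_zero.mpr hne)

theorem kontsevichMinus_ofReal_add_mul (y : ℝ) {ε : ℝ} (hε : ε ≠ 0) (z w : ℂ) :
    kontsevichMinus (y + ε * z) (y + ε * w) = kontsevichMinus z w := by
  simp only [kontsevichMinus, map_add, map_mul, Complex.conj_ofReal, add_sub_add_left_eq_sub,
    ← mul_sub]
  exact mul_div_mul_left _ _ (Complex.ofReal_ne_zero.mpr hε)

/-- In the degenerate cases division by zero makes both sides `0`. -/
theorem etaPM_eq_kontsevichMinus_mul_sqrtSumRatio_sq (z w : ℂ) (x : ℝ) :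
    etaPM z w x = kontsevichMinus z w * sqrtSumRatio z w x ^ 2 := by
  set a := csqrt (z - x) with ha
  set b := csqrt (w - x) with hb
  have ha_sq : a ^ 2 = z - x := csqrt_sq _
  have hb_sq : b ^ 2 = w - x := csqrt_sq _
  have hb_conj_sq : conj b ^ 2 = conj w - x := by
    rw [← map_pow, hb_sq, map_sub, Complex.conj_ofReal]
  have hnum : w - z = -((a - b) * (a + b)) := by linear_combination ha_sq - hb_sq
  have hden : conj w - z = -((a - conj b) * (a + conj b)) := by
    linear_combination ha_sq - hb_conj_sq
  simp only [etaPM, kontsevichMinus, sqrtSumRatio, ← ha, ← hb, hnum, hden]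
  field

theorem tendsto_csqrt_sub_ofReal {ι : Type*} {l : Filter ι} {z : ι → ℂ} {x y : ℝ} (hxy : x < y)
    (hz : Tendsto z l (𝓝 y)) : Tendsto (fun i => csqrt (z i - x)) l (𝓝 (√(y - x) : ℝ)) := by
  have hd : 0 < y - x := sub_pos.mpr hxy
  rw [← csqrt_ofReal hd.le, Complex.ofReal_sub]
  have hslit : (y : ℂ) - x ∈ Complex.slitPlane := by
    exact_mod_cast Complex.ofReal_mem_slitPlane.mpr hd
  exact (continuousAt_csqrt hslit).tendsto.comp (hz.sub_const _)

theorem tendsto_sqrtSumRatio_one {ι : Type*} {l : Filter ι} {z w : ι → ℂ} {x y : ℝ} (hxy : x < y)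
    (hz : Tendsto z l (𝓝 y)) (hw : Tendsto w l (𝓝 y)) :
    Tendsto (fun i => sqrtSumRatio (z i) (w i) x) l (𝓝 1) := by
  have ha := tendsto_csqrt_sub_ofReal hxy hz
  have hb := tendsto_csqrt_sub_ofReal hxy hw
  have hb_conj : Tendsto (fun i => conj (csqrt (w i - x))) l (𝓝 (√(y - x) : ℝ)) := by
    rw [← Complex.conj_ofReal (√(y - x))]
    exact (Complex.continuous_conj.tendsto _).comp hb
  have hsum_ne : ((√(y - x) : ℝ) : ℂ) + (√(y - x) : ℝ) ≠ 0 := by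
    have hs : 0 < √(y - x) := Real.sqrt_pos.mpr (sub_pos.mpr hxy)
    exact_mod_cast (add_pos hs hs).ne'
  rw [← div_self hsum_ne]
  exact (ha.add hb_conj).div (ha.add hb) hsum_ne

theorem tendsto_ofReal_add_mul {ι : Type*} {l : Filter ι} {ε : ι → ℝ} {ζ : ι → ℂ} {ζ₀ : ℂ} (y : ℝ)
    (hε : Tendsto ε l (𝓝 0)) (hζ : Tendsto ζ l (𝓝 ζ₀)) :
    Tendsto (fun i => (y : ℂ) + ε i * ζ i) l (𝓝 y) := by
  simpa only [Complex.ofReal_zero, zero_mul, add_zero] using (hε.ofReal.mul hζ).const_add (y : ℂ)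

theorem etaPM_tendsto_two_colored_propagator_on_gamma_general
    {ι : Type*} {l : Filter ι} {ε : ι → ℝ} {z w : ι → ℂ} {zt wt : ℂ} {x y : ℝ}
    (hne : conj wt ≠ zt) (hxy : x < y) (hε : Tendsto ε l (𝓝[≠] 0))
    (hz : Tendsto z l (𝓝 zt)) (hw : Tendsto w l (𝓝 wt)) :
    Tendsto (fun i => etaPM (y + ε i * z i) (y + ε i * w i) x) l
      (𝓝 ((wt - zt) / (conj wt - zt))) := by
  obtain ⟨hε_zero, hε_ne⟩ := tendsto_nhdsWithin_iff.mp hε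
  have hratio : Tendsto (fun i => sqrtSumRatio (y + ε i * z i) (y + ε i * w i) x) l (𝓝 1) :=
    tendsto_sqrtSumRatio_one hxy (tendsto_ofReal_add_mul y hε_zero hz)
      (tendsto_ofReal_add_mul y hε_zero hw)
  have hprod := (tendsto_kontsevichMinus hne hz hw).mul (hratio.pow 2)
  rw [one_pow, mul_one] at hprod
  refine hprod.congr' ?_
  filter_upwards [hε_ne] with i hi
  rw [etaPM_eq_kontsevichMinus_mul_sqrtSumRatio_sq, kontsevichMinus_ofReal_add_mul y hi]

/-- Restriction of `ω^{+,-}` to the boundary stratum `γ` reproduces the 2-colored propagator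
`ω^-`: for `z̃ ≠ w̃` in the open upper half-plane and reals `x < y`, as `ε → 0⁺`,
`η^{+,-}(y + ε z̃, y + ε w̃, x)` tends to `(w̃ - z̃)/(conj w̃ - z̃)`, the argument function of
Kontsevich's propagator `ω^-`. -/
theorem etaPM_tendsto_two_colored_propagator_on_gamma
    (zt wt : ℂ) (hz : 0 < zt.im) (hw : 0 < wt.im) (hne : zt ≠ wt)
    (x y : ℝ) (hxy : x < y) :
    Filter.Tendsto
      (fun ε : ℝ => etaPM ((y : ℂ) + (ε : ℂ) * zt) ((y : ℂ) + (ε : ℂ) * wt) x)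
      (nhdsWithin 0 (Set.Ioi 0))
      (nhds ((wt - zt) / ((starRingEnd ℂ) wt - zt))) := by
  exact etaPM_tendsto_two_colored_propagator_on_gamma_general (conj_ne_of_im_pos hw hz) hxy
    (tendsto_id.mono_left (nhdsGT_le_nhdsNE 0)) tendsto_const_nhds tendsto_const_nhds
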